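/- The abelianizing filtration of A(1) is multiplicative: with F⁰ = A(1), F¹ = (Sq1, Sq2), F² = (Sq2), F³ = (Sq1·Sq2, Sq2·Sq1), F⁴ = (Q₀), F⁵ = (Sq1·Q₀, Sq2·Q₀), F⁶ = (Sq2·Q₀), F⁷ = (Sq1·Sq2·Q₀), and Fⁿ = 0 for n ≥ 8, where each (x, ...) denotes the two-sided ideal generated by the listed elements and Q₀ = Sq1·Sq2 + Sq2·Sq1, we have Fᵐ · Fⁿ ⊆ F^{m+n} for all natural numbers m and n. -/

import Mathlib

/-- The relations defining `A(1)`: `Sq¹·Sq¹ = 0` and `Sq²·Sq² + Sq¹·Sq²·Sq¹ = 0`. -/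
inductive A1Rel : FreeAlgebra (ZMod 2) (Fin 2) → FreeAlgebra (ZMod 2) (Fin 2) → Prop
  | sq1 : A1Rel (FreeAlgebra.ι (ZMod 2) 0 * FreeAlgebra.ι (ZMod 2) 0) 0
  | sq2 : A1Rel (FreeAlgebra.ι (ZMod 2) 1 * FreeAlgebra.ι (ZMod 2) 1 +
      FreeAlgebra.ι (ZMod 2) 0 * FreeAlgebra.ι (ZMod 2) 1 * FreeAlgebra.ι (ZMod 2) 0) 0

/-- `A(1)`, the subalgebra of the mod 2 Steenrod algebra generated by `Sq¹` and `Sq²`, presented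
as the quotient of the free `F₂`-algebra on two generators `Sq1, Sq2` by the two-sided ideal
generated by `Sq1·Sq1` and `Sq2·Sq2 + Sq1·Sq2·Sq1`. -/
abbrev A1 : Type := RingQuot A1Rel

/-- The image of `Sq¹` in `A(1)`. -/
noncomputable def Sq1 : A1 := RingQuot.mkAlgHom (ZMod 2) A1Rel (FreeAlgebra.ι (ZMod 2) 0)

/-- The image of `Sq²` in `A(1)`. -/
noncomputable def Sq2 : A1 := RingQuot.mkAlgHom (ZMod 2) A1Rel (FreeAlgebra.ι (ZMod 2) 1)

/-- Milnor's element `Q₀ = Sq¹·Sq² + Sq²·Sq¹` in `A(1)`. -/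
noncomputable def Q0 : A1 := Sq1 * Sq2 + Sq2 * Sq1

/-- The abelianizing filtration of `A(1)`, a decreasing filtration by two-sided ideals. -/
noncomputable def abFilt : ℕ → TwoSidedIdeal A1
  | 0 => ⊤
  | 1 => TwoSidedIdeal.span {Sq1, Sq2}
  | 2 => TwoSidedIdeal.span {Sq2}
  | 3 => TwoSidedIdeal.span {Sq1 * Sq2, Sq2 * Sq1}
  | 4 => TwoSidedIdeal.span {Q0}
  | 5 => TwoSidedIdeal.span {Sq1 * Q0, Sq2 * Q0}
  | 6 => TwoSidedIdeal.span {Sq2 * Q0}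
  | 7 => TwoSidedIdeal.span {Sq1 * Sq2 * Q0}
  | _ + 8 => ⊥

namespace AbF

theorem aa : Sq1 * Sq1 = 0 := by
  have h := RingQuot.mkAlgHom_rel (ZMod 2) A1Rel.sq1
  simpa [Sq1] using h

theorem two (x : A1) : x + x = 0 := by
  have h : (2 : ZMod 2) • x = 0 := by
    have : (2 : ZMod 2) = 0 := by decide
    rw [this, zero_smul]
  rwa [two_smul] at h

theorem neg' (x : A1) : -x = x := neg_eq_of_add_eq_zero_left (two x)

theorem bb : Sq2 * Sq2 = Sq1 * (Sq2 * Sq1) := by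
  have h := RingQuot.mkAlgHom_rel (ZMod 2) A1Rel.sq2
  have h2 : Sq2 * Sq2 + Sq1 * Sq2 * Sq1 = 0 := by simpa [Sq1, Sq2] using h
  rw [← mul_assoc, eq_neg_of_add_eq_zero_left h2, neg']

theorem aax (x : A1) : Sq1 * (Sq1 * x) = 0 := by rw [← mul_assoc, aa, zero_mul]
theorem bbx (x : A1) : Sq2 * (Sq2 * x) = Sq1 * (Sq2 * (Sq1 * x)) := by
  rw [← mul_assoc, bb]; simp only [mul_assoc]
theorem baba : Sq2 * (Sq1 * (Sq2 * Sq1)) = Sq1 * (Sq2 * (Sq1 * Sq2)) := by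
  rw [← bb, bbx]
theorem babax (x : A1) :
    Sq2 * (Sq1 * (Sq2 * (Sq1 * x))) = Sq1 * (Sq2 * (Sq1 * (Sq2 * x))) := by
  rw [← bbx, bbx]

noncomputable def e : ℕ → A1
  | 0 => 1
  | 1 => Sq1
  | 2 => Sq2
  | 3 => Sq1 * Sq2
  | 4 => Sq1 * Sq2 + Sq2 * Sq1
  | 5 => Sq1 * (Sq2 * Sq1)
  | 6 => Sq2 * (Sq1 * Sq2)
  | 7 => Sq1 * (Sq2 * (Sq1 * Sq2))
  | _ + 8 => 0

noncomputable def V (n : ℕ) : AddSubgroup A1 := AddSubgroup.closure {x | ∃ i, n ≤ i ∧ e i = x}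

theorem eV {n i : ℕ} (h : n ≤ i) : e i ∈ V n := AddSubgroup.subset_closure ⟨i, h, rfl⟩

theorem V_anti {m n : ℕ} (h : m ≤ n) : V n ≤ V m := by
  apply AddSubgroup.closure_mono
  rintro x ⟨i, hi, rfl⟩
  exact ⟨i, h.trans hi, rfl⟩

theorem e_mul (i j : ℕ) : e i * e j ∈ V (i + j) := by
  by_cases hi : 8 ≤ i
  · obtain ⟨k, rfl⟩ := Nat.exists_eq_add_of_le' hi
    simp [e, zero_mem]
  by_cases hj : 8 ≤ j
  · obtain ⟨k, rfl⟩ := Nat.exists_eq_add_of_le' hj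
    simp [e, zero_mem]
  have h1 : ∀ n ≤ 1, Sq1 ∈ V n := fun n h => eV (i := 1) h
  have h2 : ∀ n ≤ 2, Sq2 ∈ V n := fun n h => eV (i := 2) h
  have h3 : ∀ n ≤ 3, Sq1 * Sq2 ∈ V n := fun n h => eV (i := 3) h
  have h4 : ∀ n ≤ 4, Sq1 * Sq2 + Sq2 * Sq1 ∈ V n := fun n h => eV (i := 4) h
  have h5 : ∀ n ≤ 5, Sq1 * (Sq2 * Sq1) ∈ V n := fun n h => eV (i := 5) h
  have h6 : ∀ n ≤ 6, Sq2 * (Sq1 * Sq2) ∈ V n := fun n h => eV (i := 6) h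
  have h7 : ∀ n ≤ 7, Sq1 * (Sq2 * (Sq1 * Sq2)) ∈ V n := fun n h => eV (i := 7) h
  have h8 : ∀ n ≤ 3, Sq2 * Sq1 ∈ V n := fun n h => by
    have := sub_mem (h4 n (by omega)) (h3 n h)
    rwa [add_sub_cancel_left] at this
  have h0 : (1 : A1) ∈ V 0 := eV (i := 0) le_rfl
  push Not at hi hj
  interval_cases i <;> interval_cases j <;>
    simp only [e, mul_add, add_mul, mul_assoc, aa, aax, bb, bbx, baba, babax, mul_zero, zero_mul,
      one_mul, mul_one, add_zero, zero_add, two] <;>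
    first
    | exact zero_mem _
    | exact h0
    | exact h1 _ (by norm_num)
    | exact h2 _ (by norm_num)
    | exact h3 _ (by norm_num)
    | exact h4 _ (by norm_num)
    | exact h5 _ (by norm_num)
    | exact h6 _ (by norm_num)
    | exact h7 _ (by norm_num)
    | exact h8 _ (by norm_num)

theorem V_mul {m n : ℕ} {x y : A1} (hx : x ∈ V m) (hy : y ∈ V n) : x * y ∈ V (m + n) := by
  induction hx using AddSubgroup.closure_induction with
  | zero => simp [zero_mem]
  | add a b _ _ ha hb => rw [add_mul]; exact add_mem ha hb
  | neg a _ ha => rw [neg']; exact ha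
  | mem a ha =>
    obtain ⟨i, hi, rfl⟩ := ha
    induction hy using AddSubgroup.closure_induction with
    | zero => simp [zero_mem]
    | add a b _ _ ha hb => rw [mul_add]; exact add_mem ha hb
    | neg a _ ha => rw [neg']; exact ha
    | mem a ha =>
      obtain ⟨j, hj, rfl⟩ := ha
      exact V_anti (by omega) (e_mul i j)

theorem V_zero (x : A1) : x ∈ V 0 := by
  obtain ⟨y, rfl⟩ := RingQuot.mkAlgHom_surjective (ZMod 2) A1Rel x
  induction y using FreeAlgebra.induction with
  | grade0 r =>
    rw [AlgHom.commutes]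
    fin_cases r
    · convert zero_mem (V 0); exact map_zero _
    · convert eV (n := 0) (i := 0) le_rfl; exact map_one _
  | grade1 i =>
    fin_cases i
    · exact eV (n := 0) (i := 1) (by norm_num)
    · exact eV (n := 0) (i := 2) (by norm_num)
  | mul a b ha hb => rw [map_mul]; exact V_mul (m := 0) (n := 0) ha hb
  | add a b ha hb => rw [map_add]; exact AddSubgroup.add_mem _ ha hb

noncomputable def I (n : ℕ) : TwoSidedIdeal A1 :=
  TwoSidedIdeal.mk' (V n) (zero_mem _) (fun h h' => add_mem h h') (fun h => neg_mem h)
    (fun {x y} h => by simpa using V_mul (V_zero x) h)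
    (fun {x y} h => by simpa using V_mul h (V_zero y))

theorem mem_I {n : ℕ} {x : A1} : x ∈ I n ↔ x ∈ V n := by
  simp [I, TwoSidedIdeal.mem_mk']

theorem le_I (n : ℕ) : abFilt n ≤ I n := by
  have h1 : ∀ k, Sq1 * e k ∈ V (1 + k) := fun k => e_mul 1 k
  have h2 : ∀ k, Sq2 * e k ∈ V (2 + k) := fun k => e_mul 2 k
  have h8 : Sq2 * Sq1 ∈ V 3 := h2 1
  have hQ : Q0 = e 4 := rfl
  match n with
  | 0 => intro x _; exact mem_I.2 (V_zero x)
  | 1 =>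
    refine TwoSidedIdeal.span_le.2 ?_
    rintro x (rfl | rfl)
    · exact mem_I.2 (eV (i := 1) (by norm_num))
    · exact mem_I.2 (eV (i := 2) (by norm_num))
  | 2 =>
    refine TwoSidedIdeal.span_le.2 ?_
    rintro x rfl
    exact mem_I.2 (eV (i := 2) (by norm_num))
  | 3 =>
    refine TwoSidedIdeal.span_le.2 ?_
    rintro x (rfl | rfl)
    · exact mem_I.2 (h1 2)
    · exact mem_I.2 h8
  | 4 =>
    refine TwoSidedIdeal.span_le.2 ?_
    rintro x rfl
    exact mem_I.2 (eV (i := 4) (by norm_num))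
  | 5 =>
    refine TwoSidedIdeal.span_le.2 ?_
    rintro x (rfl | rfl)
    · exact mem_I.2 (h1 4)
    · exact mem_I.2 (V_anti (by norm_num) (h2 4))
  | 6 =>
    refine TwoSidedIdeal.span_le.2 ?_
    rintro x rfl
    exact mem_I.2 (h2 4)
  | 7 =>
    refine TwoSidedIdeal.span_le.2 ?_
    rintro x rfl
    exact mem_I.2 (e_mul 3 4)
  | k + 8 => exact bot_le

theorem e_mem (n : ℕ) : e n ∈ abFilt n := by
  match n with
  | 0 => trivial
  | 1 => exact TwoSidedIdeal.subset_span (by simp [e])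
  | 2 => exact TwoSidedIdeal.subset_span (by simp [e])
  | 3 => exact TwoSidedIdeal.subset_span (by simp [e])
  | 4 => exact TwoSidedIdeal.subset_span (by simp [e, Q0])
  | 5 =>
    refine TwoSidedIdeal.subset_span (Or.inl ?_)
    simp [e, Q0, mul_add, aax]
  | 6 =>
    refine TwoSidedIdeal.subset_span ?_
    simp [e, Q0, mul_add, bbx, aa]
  | 7 =>
    refine TwoSidedIdeal.subset_span ?_
    simp [e, Q0, mul_add, bbx, aa, mul_assoc]
  | k + 8 => exact zero_mem _

theorem anti_succ (n : ℕ) : abFilt (n + 1) ≤ abFilt n := by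
  match n with
  | 0 => exact le_top
  | 1 => exact TwoSidedIdeal.span_mono (by simp)
  | 2 =>
    have h : Sq2 ∈ abFilt 2 := TwoSidedIdeal.subset_span (by simp)
    refine TwoSidedIdeal.span_le.2 ?_
    rintro x (rfl | rfl)
    · exact TwoSidedIdeal.mul_mem_left _ _ _ h
    · exact TwoSidedIdeal.mul_mem_right _ _ _ h
  | 3 =>
    refine TwoSidedIdeal.span_le.2 ?_
    rintro x rfl
    exact TwoSidedIdeal.add_mem _ (TwoSidedIdeal.subset_span (by simp))
      (TwoSidedIdeal.subset_span (by simp))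
  | 4 =>
    have h : Q0 ∈ abFilt 4 := TwoSidedIdeal.subset_span (by simp)
    refine TwoSidedIdeal.span_le.2 ?_
    rintro x (rfl | rfl)
    · exact TwoSidedIdeal.mul_mem_left _ _ _ h
    · exact TwoSidedIdeal.mul_mem_left _ _ _ h
  | 5 => exact TwoSidedIdeal.span_mono (by simp)
  | 6 =>
    have h : Sq2 * Q0 ∈ abFilt 6 := TwoSidedIdeal.subset_span (by simp)
    refine TwoSidedIdeal.span_le.2 ?_
    rintro x rfl
    rw [mul_assoc]
    exact TwoSidedIdeal.mul_mem_left _ _ _ h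
  | 7 => exact bot_le
  | k + 8 => exact bot_le

theorem V_le {n : ℕ} {x : A1} (hx : x ∈ V n) : x ∈ abFilt n := by
  induction hx using AddSubgroup.closure_induction with
  | zero => exact zero_mem _
  | add a b _ _ ha hb => exact add_mem ha hb
  | neg a _ ha => exact neg_mem ha
  | mem a ha =>
    obtain ⟨i, hi, rfl⟩ := ha
    exact antitone_nat_of_succ_le anti_succ hi (e_mem i)

end AbF

/-- The abelianizing filtration of `A(1)` is multiplicative: `Fᵐ · Fⁿ ⊆ F^(m+n)`. -/
theorem abFilt_multiplicative (m n : ℕ) :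
    (abFilt m).asIdeal * (abFilt n).asIdeal ≤ (abFilt (m + n)).asIdeal := by
  rw [Ideal.mul_le]
  intro r hr s hs
  rw [TwoSidedIdeal.mem_asIdeal] at *
  exact AbF.V_le (AbF.V_mul (AbF.mem_I.1 (AbF.le_I m hr)) (AbF.mem_I.1 (AbF.le_I n hs)))
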